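/- arXiv:2412.14616 — 4 statements merged into one kernel-verified Lean document; each statement's English description precedes it below -/
import Mathlib

section
/- Let s be a channel occupancy pattern obeying the SPS reselection rule. If node v keeps its slot from frame y to frame y+1, i.e. s_v(y) = s_v(y+1), then the frame state does not increase: Λ(y+1) ≤ Λ(y). Consequently, if s_v is constant on the frames of one reservation, Λ is nonincreasing throughout that reservation. -/
open Finset

/-- The frame state: number of nodes transmitting in the same slot as node `v` in frame `x`. -/
def frameState (V : ℕ) (s : ℕ → Fin V → ℕ) (v : Fin V) (x : ℕ) : ℕ :=
  (Finset.univ.filter fun i : Fin V => s x i = s x v).card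

/-- The reservation duration `B(x)`: frames since node `v` changed its slot. -/
noncomputable def resDur (V : ℕ) (s : ℕ → Fin V → ℕ) (v : Fin V) (x : ℕ) : ℕ :=
  sInf {b : ℕ | 1 ≤ b ∧ b ≤ x ∧ s (x - b) v ≠ s (x - b + 1) v}

/-- `ξ_n(x)`: end of the `n`-th reservation prior to frame `x`. -/
noncomputable def xiRes (V : ℕ) (s : ℕ → Fin V → ℕ) (v : Fin V) : ℕ → ℕ → ℕ
  | 0, x => x
  | n + 1, x => xiRes V s v n x - resDur V s v (xiRes V s v n x)

/-- The collision duration `C(x)`: frames since the last singleton transmission. -/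
noncomputable def collDur (V : ℕ) (s : ℕ → Fin V → ℕ) (v : Fin V) (x : ℕ) : ℕ :=
  sInf {c : ℕ | c ≤ x ∧ frameState V s v (x - c) = 1}

/-- The collided reservation count `W(x)`. -/
noncomputable def collResCnt (V : ℕ) (s : ℕ → Fin V → ℕ) (v : Fin V) (x : ℕ) : ℕ :=
  sInf {n : ℕ | n ≤ x ∧ frameState V s v (xiRes V s v n x) = 1}

/-- Set of empty slots in frame `x`. -/
def emptySlots (m V : ℕ) (s : ℕ → Fin V → ℕ) (x : ℕ) : Finset ℕ :=
  Finset.range m \ Finset.univ.image (s x)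

/-- The SPS reselection rule: a node changing its slot must move to a slot
that was empty in the previous frame. -/
def SPSRule (m V : ℕ) (s : ℕ → Fin V → ℕ) : Prop :=
  ∀ (u : Fin V) (x : ℕ), s (x + 1) u ≠ s x u → s (x + 1) u ∈ emptySlots m V s x

/-- The convention `s(0) = (0,…,0)`, `s(1) = (1,…,V)`. -/
def PatternConvention (V : ℕ) (s : ℕ → Fin V → ℕ) : Prop :=
  (∀ u : Fin V, s 0 u = 0) ∧ (∀ u : Fin V, s 1 u = (u : ℕ) + 1)

/-- All transmissions use slots in `{0,…,m−1}`. -/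
def PatternBounded (m V : ℕ) (s : ℕ → Fin V → ℕ) : Prop :=
  ∀ (x : ℕ) (u : Fin V), s x u < m

/-- The Age of Information at time `t`, with frame index `t / m` and position `t % m`. -/
noncomputable def AoI (m V : ℕ) (s : ℕ → Fin V → ℕ) (v : Fin V) (t : ℕ) : ℕ :=
  if t % m < s (t / m) v then m * collDur V s v (t / m - 1) + m + t % m
  else m * collDur V s v (t / m) + t % m

section SlotSharing

variable {ι α : Type*} {s : ℕ → ι → α} {v : ι}

/-- The set of nodes transmitting in the same slot as `v` in frame `x`; the frame state is its
cardinality. The nodes and the slots may be of any type, finite or not. -/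
def slotSharers (s : ℕ → ι → α) (v : ι) (x : ℕ) : Set ι :=
  {i | s x i = s x v}

/-- The part of the SPS reselection rule that does not refer to the frame size: a node never moves
to a slot that was occupied in the previous frame. -/
def AvoidsOccupiedSlots (s : ℕ → ι → α) : Prop :=
  ∀ (u : ι) (x : ℕ), s (x + 1) u ≠ s x u → s (x + 1) u ∉ Set.range (s x)

theorem AvoidsOccupiedSlots.slotSharers_succ_subset (hs : AvoidsOccupiedSlots s) {y : ℕ}
    (hv : s y v = s (y + 1) v) : slotSharers s v (y + 1) ⊆ slotSharers s v y := by
  intro i (hi : s (y + 1) i = s (y + 1) v)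
  have occupied : s (y + 1) i ∈ Set.range (s y) := ⟨v, hv.trans hi.symm⟩
  have kept : s (y + 1) i = s y i := by_contra fun moved ↦ hs i y moved occupied
  exact kept.symm.trans (hi.trans hv.symm)

theorem frameState_nonincreasing_general (hs : AvoidsOccupiedSlots s) {a b : ℕ}
    (hv : ∀ y ∈ Set.Ico a b, s y v = s (y + 1) v) :
    AntitoneOn (slotSharers s v) (Set.Icc a b) :=
  antitoneOn_of_add_one_le Set.ordConnected_Icc fun y _ hy hy' ↦
    hs.slotSharers_succ_subset (hv y ⟨hy.1, hy'.2⟩)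

end SlotSharing

theorem SPSRule.avoidsOccupiedSlots {m V : ℕ} {s : ℕ → Fin V → ℕ} (hs : SPSRule m V s) :
    AvoidsOccupiedSlots s := by
  intro u x hmove
  simpa using (mem_sdiff.mp (hs u x hmove)).2

theorem frameState_le_of_slotSharers_subset {V : ℕ} {s : ℕ → Fin V → ℕ} {v : Fin V} {y z : ℕ}
    (h : slotSharers s v z ⊆ slotSharers s v y) : frameState V s v z ≤ frameState V s v y :=
  card_le_card (monotone_filter_right univ fun _ _ hi ↦ h hi)

/-- Under the SPS reselection rule, if node `v` keeps its slot from frame `y` to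
frame `y+1` then the frame state does not increase: `Λ(y+1) ≤ Λ(y)`.
Consequently, if `s_v` is constant on the frames of one reservation, `Λ` is
nonincreasing throughout that reservation. -/
theorem frameState_nonincreasing (V m : ℕ) (hV : 1 ≤ V) (hm : V < m)
    (s : ℕ → Fin V → ℕ) (hbd : PatternBounded m V s) (hsps : SPSRule m V s)
    (v : Fin V) :
    (∀ y : ℕ, s y v = s (y + 1) v → frameState V s v (y + 1) ≤ frameState V s v y) ∧
    (∀ a b : ℕ, (∀ y : ℕ, a ≤ y → y < b → s y v = s (y + 1) v) →
      ∀ y z : ℕ, a ≤ y → y ≤ z → z ≤ b → frameState V s v z ≤ frameState V s v y) :=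
  have hs := hsps.avoidsOccupiedSlots
  ⟨fun _ hy ↦ frameState_le_of_slotSharers_subset (hs.slotSharers_succ_subset hy),
    fun _ _ hv _ _ hay hyz hzb ↦ frameState_le_of_slotSharers_subset <|
      frameState_nonincreasing_general hs (fun y hy ↦ hv y hy.1 hy.2)
        ⟨hay, hyz.trans hzb⟩ ⟨hay.trans hyz, hzb⟩ hyz⟩
end

section
/- Let s be a channel occupancy pattern obeying the SPS reselection rule and let x ∈ ℕ with x ≥ 1. Then Λ(ξ_{W(x)}(x)) = 1, and for every i ∈ {1,…, x − ξ_{W(x)}(x)} the intermediate frame states satisfy Λ(ξ_{W(x)}(x) + i) ≥ 2; hence C(x) = x − ξ_{W(x)}(x). -/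
open Finset

/-! Let `y` be the last frame up to `x` in which `v` transmits alone. No node may move into an
occupied slot, so `v` can stop being alone only by moving itself: if `y < x`, then `v` changes its
slot right after frame `y`. Thus `y` ends a reservation of `v`, and the sequence `ξ_0(x), ξ_1(x), …`
descends from `x` through every end of a reservation, so it reaches `y`. The terms before `y` lie in
`(y, x]`, where `v` always collides, hence `y` is reached at index `W(x)`. -/

section

variable {V : ℕ} {s : ℕ → Fin V → ℕ} {v : Fin V} {x y : ℕ}

/-- Once node `v` is alone in its slot, it stays alone until it moves itself: what the reselection
rule guarantees from the point of view of a single node. -/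
def SingletonPersists (V : ℕ) (s : ℕ → Fin V → ℕ) (v : Fin V) : Prop :=
  ∀ z, frameState V s v z = 1 → s (z + 1) v = s z v → frameState V s v (z + 1) = 1

/-- The frames up to `x` in which `v` transmits alone; the greatest one is the last frame without a
collision. -/
def singletonFrames (V : ℕ) (s : ℕ → Fin V → ℕ) (v : Fin V) (x : ℕ) : Set ℕ :=
  {z | z ≤ x ∧ frameState V s v z = 1}

theorem frameState_pos : 0 < frameState V s v x :=
  Finset.card_pos.mpr ⟨v, by simp⟩

theorem frameState_eq_one_iff : frameState V s v x = 1 ↔ ∀ i, s x i = s x v → i = v := by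
  rw [frameState, Finset.card_eq_one_iff_existsUnique]
  constructor
  · intro hunique i hi
    exact hunique.unique (by simpa using hi) (by simp)
  · intro halone
    exact ⟨v, by simp, by simpa using halone⟩

theorem frameState_eq_one_of_injective (h : Function.Injective (s x)) : frameState V s v x = 1 :=
  frameState_eq_one_iff.mpr fun _ hi => h hi

theorem PatternConvention.injective_one (h : PatternConvention V s) : Function.Injective (s 1) := by
  intro i j hij
  rw [h.2, h.2] at hij
  exact Fin.ext (Nat.succ_injective hij)

theorem SPSRule.ne_of_moves {m : ℕ} (h : SPSRule m V s) {u : Fin V} (hu : s (x + 1) u ≠ s x u)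
    (w : Fin V) : s (x + 1) u ≠ s x w := by
  intro huw
  have hempty : s (x + 1) u ∉ Finset.univ.image (s x) := (Finset.mem_sdiff.mp (h u x hu)).2
  exact hempty (huw ▸ Finset.mem_image_of_mem (s x) (Finset.mem_univ w))

theorem SPSRule.singletonPersists {m : ℕ} (h : SPSRule m V s) (v : Fin V) :
    SingletonPersists V s v := by
  intro z hz hstay
  rw [frameState_eq_one_iff] at hz ⊢
  intro i hi
  have hmeet : s (z + 1) i = s z v := hi.trans hstay
  by_cases hmove : s (z + 1) i = s z i
  · exact hz i (hmove.symm.trans hmeet)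
  · exact absurd hmeet (h.ne_of_moves hmove v)

theorem two_le_frameState_of_mem_Ioc (hy : y ∈ upperBounds (singletonFrames V s v x)) {z : ℕ}
    (hz : z ∈ Set.Ioc y x) : 2 ≤ frameState V s v z := by
  have hne : frameState V s v z ≠ 1 := fun h => hz.1.not_ge (hy ⟨hz.2, h⟩)
  have hpos : 0 < frameState V s v z := frameState_pos
  lia

theorem collDur_eq_of_isGreatest (hy : IsGreatest (singletonFrames V s v x) y) :
    collDur V s v x = x - y := by
  obtain ⟨⟨hyx, hsingle⟩, hlast⟩ := hy
  refine IsLeast.csInf_eq ⟨⟨Nat.sub_le x y, ?_⟩, fun c hc => ?_⟩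
  · rwa [Nat.sub_sub_self hyx]
  · have hle : x - c ≤ y := hlast ⟨Nat.sub_le x c, hc.2⟩
    lia

theorem SingletonPersists.slot_ne_slot_succ (h : SingletonPersists V s v)
    (hy : IsGreatest (singletonFrames V s v x) y) (hyx : y < x) :
    s y v ≠ s (y + 1) v := fun hstay =>
  (Nat.lt_succ_self y).not_ge (hy.2 ⟨hyx, h y hy.1.2 hstay.symm⟩)

theorem sub_resDur_mem_Ico (hyx : y < x) (hmove : s y v ≠ s (y + 1) v) :
    x - resDur V s v x ∈ Set.Ico y x := by
  have hmem : x - y ∈ {b : ℕ | 1 ≤ b ∧ b ≤ x ∧ s (x - b) v ≠ s (x - b + 1) v} :=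
    ⟨Nat.sub_pos_of_lt hyx, Nat.sub_le x y, by rwa [Nat.sub_sub_self hyx.le]⟩
  have hpos : 1 ≤ resDur V s v x := (Nat.sInf_mem ⟨_, hmem⟩).1
  have hle : resDur V s v x ≤ x - y := Nat.sInf_le hmem
  rw [Set.mem_Ico]
  lia

theorem xiRes_succ' (n x : ℕ) :
    xiRes V s v (n + 1) x = xiRes V s v n (x - resDur V s v x) := by
  induction n with
  | zero => rfl
  | succ n ih => rw [xiRes, ih, xiRes]

theorem exists_xiRes_eq (hyx : y ≤ x) (hend : y < x → s y v ≠ s (y + 1) v) :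
    ∃ n, n + y ≤ x ∧ xiRes V s v n x = y ∧ ∀ k < n, xiRes V s v k x ∈ Set.Ioc y x := by
  induction x using Nat.strong_induction_on with
  | _ x ih =>
    obtain rfl | hlt := hyx.eq_or_lt
    · exact ⟨0, by simp, rfl, by simp⟩
    · obtain ⟨hge, hdesc⟩ := sub_resDur_mem_Ico hlt (hend hlt)
      obtain ⟨n, hn, hreach, hbefore⟩ := ih _ hdesc hge fun _ => hend hlt
      refine ⟨n + 1, by lia, by rw [xiRes_succ', hreach], ?_⟩
      rintro (_ | k) hk
      · exact ⟨hlt, le_rfl⟩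
      · rw [xiRes_succ']
        exact Set.Ioc_subset_Ioc_right hdesc.le (hbefore k (Nat.lt_of_succ_lt_succ hk))

theorem SingletonPersists.xiRes_collResCnt (h : SingletonPersists V s v)
    (hy : IsGreatest (singletonFrames V s v x) y) :
    xiRes V s v (collResCnt V s v x) x = y := by
  obtain ⟨n, hn, hreach, hbefore⟩ := exists_xiRes_eq hy.1.1 (h.slot_ne_slot_succ hy)
  have hcount : collResCnt V s v x = n := by
    refine IsLeast.csInf_eq ⟨⟨by lia, hreach ▸ hy.1.2⟩, fun k hk => ?_⟩
    by_contra! hkn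
    have hcollide := two_le_frameState_of_mem_Ioc hy.2 (hbefore k hkn)
    exact absurd hk.2 (Nat.ne_of_gt hcollide)
  rw [hcount, hreach]

theorem collDur_eq_dist_to_lastSingleton_general (hpersist : SingletonPersists V s v)
    (hne : (singletonFrames V s v x).Nonempty) :
    frameState V s v (xiRes V s v (collResCnt V s v x) x) = 1 ∧
    (∀ i : ℕ, 1 ≤ i → i ≤ x - xiRes V s v (collResCnt V s v x) x →
      2 ≤ frameState V s v (xiRes V s v (collResCnt V s v x) x + i)) ∧
    collDur V s v x = x - xiRes V s v (collResCnt V s v x) x := by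
  have hbdd : BddAbove (singletonFrames V s v x) := ⟨x, fun _ hz => hz.1⟩
  obtain ⟨y, hy⟩ := hbdd.exists_isGreatest_of_nonempty hne
  rw [hpersist.xiRes_collResCnt hy]
  refine ⟨hy.1.2, fun i hi hix => ?_, collDur_eq_of_isGreatest hy⟩
  exact two_le_frameState_of_mem_Ioc hy.2 ⟨by lia, by lia⟩

end

/-- Under the SPS reselection rule, for every frame `x ≥ 1`:
`Λ(ξ_{W(x)}(x)) = 1`, every intermediate frame state
`Λ(ξ_{W(x)}(x) + i)` for `i ∈ {1,…,x − ξ_{W(x)}(x)}` is at least `2`, and hence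
`C(x) = x − ξ_{W(x)}(x)`. -/
theorem collDur_eq_dist_to_lastSingleton (V m : ℕ) (hV : 1 ≤ V) (hm : V < m)
    (s : ℕ → Fin V → ℕ) (hbd : PatternBounded m V s)
    (hconv : PatternConvention V s) (hsps : SPSRule m V s)
    (v : Fin V) (x : ℕ) (hx : 1 ≤ x) :
    frameState V s v (xiRes V s v (collResCnt V s v x) x) = 1 ∧
    (∀ i : ℕ, 1 ≤ i → i ≤ x - xiRes V s v (collResCnt V s v x) x →
      2 ≤ frameState V s v (xiRes V s v (collResCnt V s v x) x + i)) ∧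
    collDur V s v x = x - xiRes V s v (collResCnt V s v x) x :=
  collDur_eq_dist_to_lastSingleton_general (hsps.singletonPersists v)
    ⟨1, hx, frameState_eq_one_of_injective hconv.injective_one⟩
end

section
/- The SPS occupancy chain is irreducible in two steps: for all states c, d ∈ S and any τ ∈ E(c), the constant state e := (τ,…,τ) satisfies P(e | c) > 0 and P(d | e) > 0; in particular the two-step transition probability Σ_{e ∈ S} P(e | c)·P(d | e) is strictly positive for all c, d ∈ S. -/
open Finset

/-- The set of empty slots of a state `c ∈ {0,…,m−1}^V`. -/
def emptyS (V m : ℕ) (c : Fin V → Fin m) : Finset (Fin m) :=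
  Finset.univ \ Finset.univ.image c

/-- One-step transition probability of the SPS occupancy chain:
`P(d | c) = ∏_u [(1−p_E)·1{d_u = c_u} + (p_E / N(c))·1{d_u ∈ E(c)}]`. -/
noncomputable def spsP (V m : ℕ) (pE : ℝ) (c d : Fin V → Fin m) : ℝ :=
  ∏ u : Fin V,
    ((1 - pE) * (if d u = c u then 1 else 0) +
      (pE / ((emptyS V m c).card : ℝ)) * (if d u ∈ emptyS V m c then 1 else 0))

/-!
Every one-step move is possible in which each vehicle either keeps its slot or jumps to an empty
one; vehicles may collide on the same empty slot. So all vehicles can jump at once to a common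
empty slot `τ`, and since they then occupy only `τ`, each can reach any target slot in one more
step.
-/

section SPS

variable {V m : ℕ} {pE : ℝ} {c d e : Fin V → Fin m} {τ : Fin m}

theorem mem_emptyS_iff_forall_ne : τ ∈ emptyS V m c ↔ ∀ u, c u ≠ τ := by
  simp only [emptyS, mem_sdiff, mem_univ, true_and, mem_image, not_exists, ne_eq]

theorem spsP_nonneg (h0 : 0 ≤ pE) (h1 : pE ≤ 1) (c d : Fin V → Fin m) :
    0 ≤ spsP V m pE c d := by
  have : 0 ≤ 1 - pE := sub_nonneg.mpr h1
  exact prod_nonneg fun u _ => by positivity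

theorem spsP_pos_of_forall_eq_or_mem_emptyS (h0 : 0 < pE) (h1 : pE < 1)
    (h : ∀ u, d u = c u ∨ d u ∈ emptyS V m c) : 0 < spsP V m pE c d := by
  have : 0 < 1 - pE := sub_pos.mpr h1
  refine prod_pos fun u _ => ?_
  rcases h u with hkeep | hjump
  · rw [if_pos hkeep]
    positivity
  · have hcard : 0 < (emptyS V m c).card := card_pos.mpr ⟨d u, hjump⟩
    rw [if_pos hjump]
    positivity

theorem spsP_const_right_pos (h0 : 0 < pE) (h1 : pE < 1) (hτ : τ ∈ emptyS V m c) :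
    0 < spsP V m pE c (fun _ => τ) :=
  spsP_pos_of_forall_eq_or_mem_emptyS h0 h1 fun _ => Or.inr hτ

theorem spsP_const_left_pos (h0 : 0 < pE) (h1 : pE < 1) (τ : Fin m) (d : Fin V → Fin m) :
    0 < spsP V m pE (fun _ => τ) d :=
  spsP_pos_of_forall_eq_or_mem_emptyS h0 h1 fun u =>
    (eq_or_ne (d u) τ).imp_right fun hne => mem_emptyS_iff_forall_ne.mpr fun _ => hne.symm

theorem sum_spsP_mul_spsP_pos (h0 : 0 ≤ pE) (h1 : pE ≤ 1)
    (hce : 0 < spsP V m pE c e) (hed : 0 < spsP V m pE e d) :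
    0 < ∑ e' : Fin V → Fin m, spsP V m pE c e' * spsP V m pE e' d :=
  sum_pos' (fun e' _ => mul_nonneg (spsP_nonneg h0 h1 c e') (spsP_nonneg h0 h1 e' d))
    ⟨e, mem_univ e, mul_pos hce hed⟩

theorem spsP_two_step_pos_general (h0 : 0 < pE) (h1 : pE < 1) (d : Fin V → Fin m)
    (hτ : τ ∈ emptyS V m c) :
    0 < spsP V m pE c (fun _ => τ) ∧
    0 < spsP V m pE (fun _ => τ) d ∧
    0 < ∑ e : Fin V → Fin m, spsP V m pE c e * spsP V m pE e d := by
  have hcτ : 0 < spsP V m pE c (fun _ => τ) := spsP_const_right_pos h0 h1 hτ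
  have hτd : 0 < spsP V m pE (fun _ => τ) d := spsP_const_left_pos h0 h1 τ d
  exact ⟨hcτ, hτd, sum_spsP_mul_spsP_pos h0.le h1.le hcτ hτd⟩

end SPS

/-- **Irreducibility in two steps:** for all states `c, d` and any `τ ∈ E(c)`, the
constant state `e = (τ,…,τ)` satisfies `P(e|c) > 0` and `P(d|e) > 0`; in particular
the two-step transition probability from `c` to `d` is strictly positive. -/
theorem spsP_two_step_pos (V m : ℕ) (hV : 1 ≤ V) (hm : V < m)
    (pE : ℝ) (hpE0 : 0 < pE) (hpE1 : pE < 1)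
    (c d : Fin V → Fin m) (τ : Fin m) (hτ : τ ∈ emptyS V m c) :
    0 < spsP V m pE c (fun _ => τ) ∧
    0 < spsP V m pE (fun _ => τ) d ∧
    0 < ∑ e : Fin V → Fin m, spsP V m pE c e * spsP V m pE e d :=
  spsP_two_step_pos_general hpE0 hpE1 d hτ
end

section
/- The SPS occupancy chain possesses exactly one stationary probability mass function: there exists a unique probability mass function π on S such that π(d) = Σ_{c ∈ S} π(c)·P(d | c) for all d ∈ S. -/
open Finset

/-!
The absolute value of a stationary vector `v` of a stochastic matrix is stationary: the triangle
inequality gives `|v| ≤ |v| P` entrywise, and both sides have the same total mass. As `1` is a right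
eigenvalue of `P`, it is a left eigenvalue, so a stationary `v ≠ 0` exists; normalizing `|v|` gives
a stationary probability vector.

A nonnegative stationary vector is positive at every state that can be reached from its support.
If some state `s` can be reached from everywhere, then the difference `w` of two stationary
probability vectors, with sign chosen so that `w s ≤ 0`, satisfies `|w| + w = 0`, because
`|w| + w` vanishes at `s`. Thus `w ≤ 0`, and `w = 0` since its entries sum to zero.

For the SPS chain one may take for `s` any state in which all vehicles occupy a common slot `z`:
they can all move into `z` at once when it is empty, and otherwise after first moving together
into another slot.
-/

section StationaryVectors

open Matrix Relation

variable {R ι : Type*} [Fintype ι]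

theorem exists_vecMul_eq_self_iff [CommRing R] [IsDomain R] {P : Matrix ι ι R} :
    (∃ v ≠ 0, v ᵥ* P = v) ↔ ∃ v ≠ 0, P *ᵥ v = v := by
  classical
  have h := (exists_vecMul_eq_zero_iff (M := P - 1)).trans exists_mulVec_eq_zero_iff.symm
  simpa only [vecMul_sub, vecMul_one, sub_mulVec, one_mulVec, sub_eq_zero] using h

theorem sum_vecMul_of_mem_rowStochastic [Semiring R] [PartialOrder R] [IsOrderedRing R]
    [DecidableEq ι] {P : Matrix ι ι R} (hP : P ∈ rowStochastic R ι) (v : ι → R) :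
    ∑ i, (v ᵥ* P) i = ∑ i, v i := by
  rw [← dotProduct_one, ← dotProduct_mulVec, one_vecMul_of_mem_rowStochastic hP, dotProduct_one]

theorem abs_vecMul_le [Ring R] [LinearOrder R] [IsOrderedRing R] {P : Matrix ι ι R}
    (hP : ∀ i j, 0 ≤ P i j) (v : ι → R) : |v ᵥ* P| ≤ |v| ᵥ* P := by
  intro j
  calc |∑ i, v i * P i j| ≤ ∑ i, |v i * P i j| := abs_sum_le_sum_abs _ _
    _ = ∑ i, |v i| * P i j := by simp only [abs_mul, abs_of_nonneg (hP _ _)]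

theorem abs_vecMul_eq_self [Ring R] [LinearOrder R] [IsOrderedRing R] [DecidableEq ι]
    {P : Matrix ι ι R} (hP : P ∈ rowStochastic R ι) {v : ι → R} (hv : v ᵥ* P = v) :
    |v| ᵥ* P = |v| := by
  have hle : |v| ≤ |v| ᵥ* P := by
    simpa only [hv] using abs_vecMul_le hP.1 v
  have hsum : ∑ j, |v| j = ∑ j, (|v| ᵥ* P) j := (sum_vecMul_of_mem_rowStochastic hP |v|).symm
  funext j
  exact ((sum_eq_sum_iff_of_le fun j _ ↦ hle j).mp hsum j (mem_univ j)).symm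

theorem exists_mem_stdSimplex_vecMul_eq_self [Field R] [LinearOrder R] [IsStrictOrderedRing R]
    [DecidableEq ι] [Nonempty ι] {P : Matrix ι ι R} (hP : P ∈ rowStochastic R ι) :
    ∃ π ∈ stdSimplex R ι, π ᵥ* P = π := by
  obtain ⟨v, hv_ne, hv⟩ := exists_vecMul_eq_self_iff.mpr
    ⟨1, one_ne_zero, one_vecMul_of_mem_rowStochastic hP⟩
  obtain ⟨i, hi⟩ := Function.ne_iff.mp hv_ne
  have hmass : 0 < ∑ j, |v j| :=
    sum_pos' (fun j _ ↦ abs_nonneg (v j)) ⟨i, mem_univ i, abs_pos.mpr hi⟩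
  refine ⟨(∑ j, |v j|)⁻¹ • |v|, ⟨fun j ↦ ?_, ?_⟩, ?_⟩
  · exact mul_nonneg (inv_nonneg.mpr hmass.le) (abs_nonneg (v j))
  · simp only [Pi.smul_apply, Pi.abs_apply, smul_eq_mul, ← mul_sum]
    exact inv_mul_cancel₀ hmass.ne'
  · rw [smul_vecMul, abs_vecMul_eq_self hP hv]

theorem pos_of_reflTransGen_of_vecMul_eq_self [Semiring R] [PartialOrder R]
    [IsStrictOrderedRing R] {P : Matrix ι ι R} (hP : ∀ i j, 0 ≤ P i j) {v : ι → R} (hv : 0 ≤ v)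
    (hvP : v ᵥ* P = v) {i j : ι} (hij : ReflTransGen (fun a b ↦ 0 < P a b) i j) (hi : 0 < v i) :
    0 < v j := by
  induction hij with
  | refl => exact hi
  | @tail a b _ hab ha =>
    rw [← hvP]
    exact sum_pos' (fun k _ ↦ mul_nonneg (hv k) (hP k b)) ⟨a, mem_univ a, mul_pos ha hab⟩

variable [DecidableEq ι] {P : Matrix ι ι R} {s : ι}

theorem nonpos_of_vecMul_eq_self_of_apply_nonpos [Ring R] [LinearOrder R] [IsStrictOrderedRing R]
    (hP : P ∈ rowStochastic R ι) (hs : ∀ i, ReflTransGen (fun a b ↦ 0 < P a b) i s)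
    {w : ι → R} (hw : w ᵥ* P = w) (hws : w s ≤ 0) : w ≤ 0 := by
  have hfix : (|w| + w) ᵥ* P = |w| + w := by rw [add_vecMul, abs_vecMul_eq_self hP hw, hw]
  have hnonneg : 0 ≤ |w| + w := fun i ↦ neg_le_iff_add_nonneg.mp (neg_le_abs (w i))
  have hzero : (|w| + w) s = 0 := by simp [abs_of_nonpos hws]
  intro i
  by_contra hi
  have hi_pos : 0 < (|w| + w) i := add_pos_of_nonneg_of_pos (abs_nonneg _) (not_le.mp hi)
  exact (pos_of_reflTransGen_of_vecMul_eq_self hP.1 hnonneg hfix (hs i) hi_pos).ne' hzero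

theorem eq_zero_of_vecMul_eq_self_of_sum_eq_zero [Ring R] [LinearOrder R] [IsStrictOrderedRing R]
    (hP : P ∈ rowStochastic R ι) (hs : ∀ i, ReflTransGen (fun a b ↦ 0 < P a b) i s)
    {w : ι → R} (hw : w ᵥ* P = w) (hsum : ∑ i, w i = 0) : w = 0 := by
  wlog hws : w s ≤ 0 generalizing w
  · have hneg : (-w) s ≤ 0 := neg_nonpos.mpr (not_le.mp hws).le
    exact neg_eq_zero.mp (this (by rw [neg_vecMul, hw]) (by simp [hsum]) hneg)
  have hw_nonpos : w ≤ 0 := nonpos_of_vecMul_eq_self_of_apply_nonpos hP hs hw hws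
  exact (Fintype.sum_eq_zero_iff_of_nonpos hw_nonpos).mp hsum

theorem existsUnique_mem_stdSimplex_vecMul_eq_self [Field R] [LinearOrder R]
    [IsStrictOrderedRing R] (hP : P ∈ rowStochastic R ι)
    (hs : ∀ i, ReflTransGen (fun a b ↦ 0 < P a b) i s) :
    ∃! π, π ∈ stdSimplex R ι ∧ π ᵥ* P = π := by
  have : Nonempty ι := ⟨s⟩
  obtain ⟨π, hπ, hπP⟩ := exists_mem_stdSimplex_vecMul_eq_self hP
  refine ⟨π, ⟨hπ, hπP⟩, fun ρ ⟨hρ, hρP⟩ ↦ sub_eq_zero.mp ?_⟩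
  refine eq_zero_of_vecMul_eq_self_of_sum_eq_zero hP hs ?_ ?_
  · rw [sub_vecMul, hρP, hπP]
  · simp only [Pi.sub_apply, sum_sub_distrib, hρ.2, hπ.2, sub_self]

end StationaryVectors

section SPSChain

open Matrix Relation

variable {V m : ℕ} {pE : ℝ}

theorem mem_emptyS {c : Fin V → Fin m} {x : Fin m} : x ∈ emptyS V m c ↔ ∀ u, c u ≠ x := by
  simp [emptyS]

theorem emptyS_nonempty (hm : V < m) (c : Fin V → Fin m) : (emptyS V m c).Nonempty := by
  have hc : ¬ Function.Surjective c := fun h ↦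
    hm.not_ge (by simpa only [Fintype.card_fin] using Fintype.card_le_of_surjective c h)
  simpa only [Function.Surjective, not_forall, not_exists, Finset.Nonempty, mem_emptyS] using hc

/-- The probability that vehicle `u` occupies slot `x` after one step of the SPS chain from the
state `c`. Given `c` the vehicles move independently, so `spsP` is the product of these. -/
noncomputable def spsSlotP (pE : ℝ) (c : Fin V → Fin m) (u : Fin V) (x : Fin m) : ℝ :=
  (1 - pE) * (if x = c u then 1 else 0) +
    (pE / ((emptyS V m c).card : ℝ)) * (if x ∈ emptyS V m c then 1 else 0)

theorem spsP_eq_prod (c d : Fin V → Fin m) : spsP V m pE c d = ∏ u, spsSlotP pE c u (d u) :=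
  rfl

theorem spsSlotP_nonneg (h0 : 0 ≤ pE) (h1 : pE ≤ 1) (c : Fin V → Fin m) (u : Fin V) (x : Fin m) :
    0 ≤ spsSlotP pE c u x := by
  have : 0 ≤ 1 - pE := sub_nonneg.mpr h1
  unfold spsSlotP
  positivity

theorem sum_spsSlotP (hm : V < m) (pE : ℝ) (c : Fin V → Fin m) (u : Fin V) :
    ∑ x, spsSlotP pE c u x = 1 := by
  have hN : ((emptyS V m c).card : ℝ) ≠ 0 :=
    Nat.cast_ne_zero.mpr (emptyS_nonempty hm c).card_ne_zero
  calc ∑ x, spsSlotP pE c u x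
      = (1 - pE) + pE / (emptyS V m c).card * (emptyS V m c).card := by
        simp only [spsSlotP, sum_add_distrib, ← mul_sum, sum_ite_eq', mem_univ, if_true, mul_one,
          sum_boole, filter_univ_mem]
    _ = 1 := by rw [div_mul_cancel₀ _ hN, sub_add_cancel]

theorem spsSlotP_pos_of_mem_emptyS (h0 : 0 < pE) (h1 : pE ≤ 1) {c : Fin V → Fin m} (u : Fin V)
    {x : Fin m} (hx : x ∈ emptyS V m c) : 0 < spsSlotP pE c u x := by
  have : 0 ≤ 1 - pE := sub_nonneg.mpr h1
  have hN : 0 < (emptyS V m c).card := card_pos.mpr ⟨x, hx⟩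
  simp only [spsSlotP, if_pos hx]
  positivity

theorem spsP_mem_rowStochastic (hm : V < m) (h0 : 0 ≤ pE) (h1 : pE ≤ 1) :
    of (spsP V m pE) ∈ rowStochastic ℝ (Fin V → Fin m) := by
  refine mem_rowStochastic_iff_sum.mpr ⟨fun c d ↦ ?_, fun c ↦ ?_⟩
  · rw [of_apply, spsP_eq_prod]
    exact prod_nonneg fun u _ ↦ spsSlotP_nonneg h0 h1 c u (d u)
  · simp only [of_apply, spsP_eq_prod]
    rw [← Fintype.prod_sum]
    exact prod_eq_one fun u _ ↦ sum_spsSlotP hm pE c u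

theorem spsP_const_pos (h0 : 0 < pE) (h1 : pE ≤ 1) {c : Fin V → Fin m} {x : Fin m}
    (hx : x ∈ emptyS V m c) : 0 < spsP V m pE c (fun _ ↦ x) :=
  prod_pos fun u _ ↦ spsSlotP_pos_of_mem_emptyS h0 h1 u hx

theorem reflTransGen_spsP_const (hm : V < m) (h0 : 0 < pE) (h1 : pE ≤ 1) (c : Fin V → Fin m)
    (z : Fin m) : ReflTransGen (fun a b ↦ 0 < spsP V m pE a b) c (fun _ ↦ z) := by
  by_cases hz : z ∈ emptyS V m c
  · exact .single (spsP_const_pos h0 h1 hz)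
  · obtain ⟨e, he⟩ := emptyS_nonempty hm c
    have hez : e ≠ z := ne_of_mem_of_not_mem he hz
    have hz_empty : z ∈ emptyS V m fun _ ↦ e := mem_emptyS.mpr fun _ ↦ hez
    exact .tail (.single (spsP_const_pos h0 h1 he)) (spsP_const_pos h0 h1 hz_empty)

theorem spsP_unique_stationary_general (V m : ℕ) (hm : V < m)
    (pE : ℝ) (hpE0 : 0 < pE) (hpE1 : pE ≤ 1) :
    ∃! π : (Fin V → Fin m) → ℝ,
      (∀ c, 0 ≤ π c) ∧ (∑ c : Fin V → Fin m, π c = 1) ∧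
      (∀ d, π d = ∑ c : Fin V → Fin m, π c * spsP V m pE c d) := by
  let z : Fin m := ⟨0, V.zero_le.trans_lt hm⟩
  have hstoch := spsP_mem_rowStochastic hm hpE0.le hpE1
  have hreach (c) := reflTransGen_spsP_const hm hpE0 hpE1 c z
  refine (existsUnique_congr fun π ↦ ?_).mp
    (existsUnique_mem_stdSimplex_vecMul_eq_self hstoch hreach)
  have hfix : π ᵥ* of (spsP V m pE) = π ↔ ∀ d, π d = ∑ c, π c * spsP V m pE c d :=
    eq_comm.trans funext_iff
  rw [hfix, stdSimplex, Set.mem_ofPred_eq, and_assoc]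

end SPSChain

/-- **Existence and uniqueness of the stationary pmf:** the SPS occupancy chain has
exactly one stationary probability mass function. -/
theorem spsP_unique_stationary (V m : ℕ) (hV : 1 ≤ V) (hm : V < m)
    (pE : ℝ) (hpE0 : 0 < pE) (hpE1 : pE < 1) :
    ∃! π : (Fin V → Fin m) → ℝ,
      (∀ c, 0 ≤ π c) ∧ (∑ c : Fin V → Fin m, π c = 1) ∧
      (∀ d, π d = ∑ c : Fin V → Fin m, π c * spsP V m pE c d) :=
  spsP_unique_stationary_general V m hm pE hpE0 hpE1.le
end
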